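/- arXiv:1110.5001 — 3 statements merged into one kernel-verified Lean document; each statement's English description precedes it below -/
import Mathlib

section
/- Let p be a prime and let (M_e, φ_e) be a p-compatible system. If m = (m_e) ∈ lim_e M_e satisfies m_n = 0 for some n, then m is divisible by p^n in lim_e M_e, i.e., there exists m' ∈ lim_e M_e with m = p^n m'. -/
/-- The limit `lim_e M_e` of an `ℕ`-indexed projective system of abelian groups,
realized as the subgroup of the product `∀ e, M e` of compatible families. -/
def projLim (M : ℕ → Type*) [∀ e, AddCommGroup (M e)] (φ : ∀ e, M (e + 1) →+ M e) :
    AddSubgroup (∀ e, M e) where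
  carrier := { m | ∀ e, φ e (m (e + 1)) = m e }
  zero_mem' := by intro e; simp
  add_mem' := by intro a b ha hb e; simp [ha e, hb e]
  neg_mem' := by intro a ha e; simp [ha e]

theorem exists_trans (M : ℕ → Type*) [∀ e, AddCommGroup (M e)] (φ : ∀ e, M (e + 1) →+ M e) :
    ∃ τ : ∀ k e, k ≤ e → (M e →+ M k), (∀ k, τ k k le_rfl = AddMonoidHom.id _) ∧
      ∀ k e (h : k ≤ e), τ k (e + 1) (Nat.le_succ_of_le h) = (τ k e h).comp (φ e) := by
  refine ⟨fun k e h => Nat.leRec (motive := fun e _ => M e →+ M k) (AddMonoidHom.id _)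
    (fun e _ f => f.comp (φ e)) h, ?_, ?_⟩
  · intro k
    exact Nat.leRec_self _ _
  · intro k e h
    exact Nat.leRec_succ _ _ _

/-- Let `p` be a prime and `(M_e, φ_e)` a `p`-compatible system:
each `M_e` is killed by `p^e` (equivalently, is a `ℤ/p^e`-module), each `φ_e` is
surjective with kernel `p^e M_{e+1}` (i.e. induces `M_{e+1}/p^e ≅ M_e`).
If `m = (m_e) ∈ lim_e M_e` satisfies `m_n = 0`, then `m = p^n • m'` for some
`m' ∈ lim_e M_e`. -/
theorem statement2 (p : ℕ) (hp : p.Prime)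
    (M : ℕ → Type*) [∀ e, AddCommGroup (M e)] (φ : ∀ e, M (e + 1) →+ M e)
    (tors : ∀ (e : ℕ) (x : M e), p ^ e • x = 0)
    (surj : ∀ e, Function.Surjective (φ e))
    (ker : ∀ (e : ℕ) (x : M (e + 1)), φ e x = 0 ↔ ∃ y : M (e + 1), x = p ^ e • y)
    (n : ℕ) (m : projLim M φ) (hm : (m : ∀ e, M e) n = 0) :
    ∃ m' : projLim M φ, m = p ^ n • m' := by
  obtain ⟨τ, τ0, τs⟩ := exists_trans M φ
  obtain ⟨m, hmm⟩ := m
  replace hmm : ∀ e, φ e (m (e + 1)) = m e := hmm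
  change m n = 0 at hm
  have τm : ∀ k e (h : k ≤ e), τ k e h (m e) = m k := by
    intro k e h
    induction e, h using Nat.le_induction with
    | base => simp [τ0]
    | succ e h ih => rw [τs k e h]; simp [hmm, ih]
  have φτ : ∀ k e (h : k + 1 ≤ e) (x : M e),
      φ k (τ (k + 1) e h x) = τ k e (Nat.le_of_succ_le h) x := by
    intro k e h
    induction e, h using Nat.le_induction with
    | base => intro x; rw [τs k k le_rfl]; simp [τ0]
    | succ e h ih => intro x; rw [τs (k + 1) e h, τs k e (Nat.le_of_succ_le h)]; simp [ih]
  have step : ∀ k (y : {y : M (n + k) // p ^ n • y = m (n + k)}),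
      ∃ y' : {y : M (n + (k + 1)) // p ^ n • y = m (n + (k + 1))},
        ∃ w : M (n + k), φ (n + k) y'.1 = y.1 - p ^ k • w := by
    rintro k ⟨y, hy⟩
    obtain ⟨z, hz⟩ := surj (n + k) y
    obtain ⟨w, hw⟩ := (ker (n + k) (p ^ n • z - m (n + k + 1))).1 (by
      rw [map_sub, map_nsmul, hz, hmm, hy, sub_self])
    refine ⟨⟨z - p ^ k • w, ?_⟩, φ (n + k) w, ?_⟩
    · change p ^ n • (z - p ^ k • w) = m (n + k + 1)
      rw [smul_sub, smul_smul, ← pow_add, ← hw, sub_sub_cancel]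
    · change φ (n + k) (z - p ^ k • w) = _
      rw [map_sub, map_nsmul, hz]
  choose f hf using step
  let Y : ∀ k, {y : M (n + k) // p ^ n • y = m (n + k)} := fun k =>
    Nat.rec (motive := fun k => {y : M (n + k) // p ^ n • y = m (n + k)})
      ⟨0, by rw [smul_zero]; exact hm.symm⟩ f k
  have hY : ∀ k, ∃ w : M (n + k), φ (n + k) (Y (k + 1)).1 = (Y k).1 - p ^ k • w :=
    fun k => hf k (Y k)
  refine ⟨⟨fun k => τ k (n + k) (Nat.le_add_left k n) (Y k).1, ?_⟩, ?_⟩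
  · intro k
    obtain ⟨w, hw⟩ := hY k
    change φ k (τ (k + 1) (n + k + 1) _ (Y (k + 1)).1) = _
    rw [φτ, τs k (n + k) (Nat.le_add_left k n), AddMonoidHom.comp_apply, hw, map_sub,
      map_nsmul, tors, sub_zero]
  · apply Subtype.ext
    funext k
    change m k = p ^ n • τ k (n + k) (Nat.le_add_left k n) (Y k).1
    rw [← map_nsmul, (Y k).2, τm]
end

section
/- Let σ be a set and let P = ℤ_p[{x_i}_{i ∈ σ}] be the polynomial ring over ℤ_p in variables indexed by σ. For each n ≥ 0 let P(n) = P ⊗_{ℤ_p} ⋯ ⊗_{ℤ_p} P ((n+1) tensor factors), viewed as a cosimplicial commutative ring via the monotone maps: a morphism f : [n] → [m] in Δ induces the ring map P(n) → P(m) sending the element x_i placed in the e-th tensor slot to x_i placed in the f(e)-th tensor slot. Then the cochain complex of abelian groups whose n-th term is the module of Kähler differentials Ω¹_{P(n)/ℤ_p} and whose differential d^n = Σ_{j=0}^{n+1} (−1)^j (δ^n_j)_* is the alternating sum of the maps on Kähler differentials induced by the coface ring homomorphisms is homotopy equivalent to the zero cochain complex. -/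
open KaehlerDifferential

/-- The map `g_* : Ω¹_{A/R} → Ω¹_{B/R}` on Kähler differentials induced by a homomorphism
`g : A → B` of commutative `R`-algebras, sending `b · db'` to `g(b) · d(g(b'))`. -/
noncomputable def kaehlerMap {R A B : Type*} [CommRing R] [CommRing A] [CommRing B]
    [Algebra R A] [Algebra R B] (g : A →ₐ[R] B) : Ω[A⁄R] →+ Ω[B⁄R] :=
  letI : Algebra A B := g.toRingHom.toAlgebra
  haveI : IsScalarTower R A B := IsScalarTower.of_algebraMap_eq fun r => (g.commutes r).symm
  haveI : SMulCommClass R A B :=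
    ⟨fun r a b => by simp only [Algebra.smul_def, ← mul_assoc, mul_comm]⟩
  (KaehlerDifferential.map R R A B).toAddMonoidHom

/-- `P(n) = P ⊗_{ℤ_p} ⋯ ⊗_{ℤ_p} P` (`n+1` tensor factors) for `P = ℤ_p[{x_i}_{i ∈ σ}]`,
realized as the polynomial ring on the variables `x_i(e) = 1 ⊗ ⋯ ⊗ x_i ⊗ ⋯ ⊗ 1`
(with `x_i` in the `e`-th slot), i.e. on `σ × Fin (n+1)`. -/
abbrev tensorPowerPoly (p : ℕ) [Fact p.Prime] (σ : Type*) (n : ℕ) : Type _ :=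
  MvPolynomial (σ × Fin (n + 1)) (PadicInt p)

/-- The `j`-th coface ring homomorphism `δ^n_j : P(n) → P(n+1)`: it sends the variable
`x_i` in the `e`-th tensor slot to `x_i` in the `δ^n_j(e)`-th slot, where
`δ^n_j = Fin.succAbove j` is the injective monotone map omitting `j`
(slot `e ↦ e` for `e < j` and `e ↦ e+1` for `e ≥ j`). -/
noncomputable def tensorPowerPolyCoface (p : ℕ) [Fact p.Prime] (σ : Type*) (n : ℕ)
    (j : Fin (n + 2)) : tensorPowerPoly p σ n →ₐ[PadicInt p] tensorPowerPoly p σ (n + 1) :=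
  MvPolynomial.rename (Prod.map id (Fin.succAbove j))

/-- The differential `d^n = Σ_{j=0}^{n+1} (−1)^j (δ^n_j)_*` on Kähler differentials. -/
noncomputable def tensorPowerPolyOmegaDiff (p : ℕ) [Fact p.Prime] (σ : Type*) (n : ℕ) :
    Ω[tensorPowerPoly p σ n⁄PadicInt p] →+ Ω[tensorPowerPoly p σ (n + 1)⁄PadicInt p] :=
  ∑ j : Fin (n + 2), (-1 : ℤ) ^ (j : ℕ) • kaehlerMap (tensorPowerPolyCoface p σ n j)

theorem kaehlerMap_smul_D {R A B : Type*} [CommRing R] [CommRing A] [CommRing B]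
    [Algebra R A] [Algebra R B] (g : A →ₐ[R] B) (a b : A) :
    kaehlerMap g (a • KaehlerDifferential.D R A b) =
      g a • KaehlerDifferential.D R B (g b) := by
  letI : Algebra A B := g.toRingHom.toAlgebra
  haveI : IsScalarTower R A B := IsScalarTower.of_algebraMap_eq fun r => (g.commutes r).symm
  haveI : SMulCommClass R A B :=
    ⟨fun r a b => by simp only [Algebra.smul_def, ← mul_assoc, mul_comm]⟩
  change KaehlerDifferential.map R R A B (a • KaehlerDifferential.D R A b) = _
  rw [map_smul, KaehlerDifferential.map_D, ← algebraMap_smul B a]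
  rfl

theorem omega_hom_ext {R τ M : Type*} [CommRing R] [AddCommGroup M]
    (f g : Ω[MvPolynomial τ R⁄R] →+ M)
    (h : ∀ (a : MvPolynomial τ R) (v : τ),
      f (a • KaehlerDifferential.D R _ (MvPolynomial.X v)) =
        g (a • KaehlerDifferential.D R _ (MvPolynomial.X v))) : f = g := by
  ext x
  have hx : x ∈ Submodule.span (MvPolynomial τ R)
      (Set.range (KaehlerDifferential.mvPolynomialBasis R τ)) := by
    rw [Module.Basis.span_eq]; trivial
  have key : ∀ a : MvPolynomial τ R, f (a • x) = g (a • x) := by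
    induction hx using Submodule.span_induction with
    | mem x hx =>
      obtain ⟨v, rfl⟩ := hx
      intro a
      rw [KaehlerDifferential.mvPolynomialBasis_apply]
      exact h a v
    | zero => simp
    | add x y _ _ hx hy => intro a; simp [hx a, hy a]
    | smul b x _ hx => intro a; rw [smul_smul]; exact hx _
  simpa using key 1

/-- Projection of `Ω¹` onto the span of the `dx_v` with `v ∈ q`. -/
noncomputable def omegaCut {R τ : Type*} [CommRing R] (q : τ → Prop) :
    Ω[MvPolynomial τ R⁄R] →ₗ[MvPolynomial τ R] Ω[MvPolynomial τ R⁄R] :=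
  open Classical in
  (MvPolynomial.mkDerivation R fun v =>
    if q v then KaehlerDifferential.D R (MvPolynomial τ R) (MvPolynomial.X v)
      else 0).liftKaehlerDifferential

theorem omegaCut_smul_D {R τ : Type*} [CommRing R] (q : τ → Prop) [DecidablePred q]
    (a : MvPolynomial τ R) (v : τ) :
    omegaCut q (a • KaehlerDifferential.D R _ (MvPolynomial.X v)) =
      if q v then a • KaehlerDifferential.D R _ (MvPolynomial.X v) else 0 := by
  rw [map_smul, omegaCut, Derivation.liftKaehlerDifferential_comp_D,
    MvPolynomial.mkDerivation_X]
  split_ifs <;> simp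

/-- The `j`-th summand of the homotopy. -/
noncomputable def omegaT (p : ℕ) [Fact p.Prime] (σ : Type*) (n : ℕ) (j : Fin (n + 1)) :
    Ω[tensorPowerPoly p σ (n + 1)⁄PadicInt p] →+ Ω[tensorPowerPoly p σ n⁄PadicInt p] :=
  (kaehlerMap (MvPolynomial.rename (R := PadicInt p)
    (Prod.map (id : σ → σ) (Fin.predAbove j)))).comp
    (omegaCut fun v : σ × Fin (n + 2) => v.2 ≤ j.castSucc).toAddMonoidHom

theorem omegaT_apply (p : ℕ) [Fact p.Prime] (σ : Type*) (n : ℕ) (j : Fin (n + 1))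
    (a : tensorPowerPoly p σ (n + 1)) (i : σ) (e : Fin (n + 2)) :
    omegaT p σ n j (a • KaehlerDifferential.D _ _ (MvPolynomial.X (i, e))) =
      if e ≤ j.castSucc then
        (MvPolynomial.rename (Prod.map (id : σ → σ) (Fin.predAbove j)) a :
          tensorPowerPoly p σ n) •
          KaehlerDifferential.D _ _ (MvPolynomial.X (i, Fin.predAbove j e)) else 0 := by
  rw [omegaT, AddMonoidHom.comp_apply, LinearMap.toAddMonoidHom_coe, omegaCut_smul_D]
  split_ifs
  · rw [kaehlerMap_smul_D, MvPolynomial.rename_X]; rfl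
  · simp

theorem coface_apply (p : ℕ) [Fact p.Prime] (σ : Type*) (n : ℕ) (k : Fin (n + 2))
    (a : tensorPowerPoly p σ n) (i : σ) (e : Fin (n + 1)) :
    kaehlerMap (tensorPowerPolyCoface p σ n k)
        (a • KaehlerDifferential.D _ _ (MvPolynomial.X (i, e))) =
      (MvPolynomial.rename (Prod.map (id : σ → σ) (Fin.succAbove k)) a :
        tensorPowerPoly p σ (n + 1)) •
        KaehlerDifferential.D _ _ (MvPolynomial.X (i, Fin.succAbove k e)) := by
  rw [kaehlerMap_smul_D, tensorPowerPolyCoface, MvPolynomial.rename_X]; rfl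

theorem fin_fun_eq (n : ℕ) (j : Fin (n + 1)) (k : Fin (n + 2)) (e : Fin (n + 2)) :
    Fin.predAbove (k.succAbove j) (((k.succAbove j).castSucc.succAbove k).succAbove e) =
      k.succAbove (j.predAbove e) := by
  obtain ⟨j, hj⟩ := j
  obtain ⟨k, hk⟩ := k
  obtain ⟨e, he⟩ := e
  ext
  simp only [Fin.succAbove, Fin.predAbove, Fin.lt_def, Fin.castSucc_mk, Fin.succ_mk]
  split_ifs <;> simp_all [Fin.lt_def] <;> (try split_ifs at *) <;> simp_all <;> omega

theorem fin_le_iff (n : ℕ) (j : Fin (n + 1)) (k : Fin (n + 2)) (e : Fin (n + 2)) :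
    ((k.succAbove j).castSucc.succAbove k).succAbove e ≤ (k.succAbove j).castSucc ↔
      e ≤ j.castSucc := by
  obtain ⟨j, hj⟩ := j
  obtain ⟨k, hk⟩ := k
  obtain ⟨e, he⟩ := e
  simp only [Fin.succAbove, Fin.lt_def, Fin.le_def, Fin.castSucc_mk, Fin.succ_mk]
  split_ifs <;> simp_all <;> (try split_ifs at *) <;> simp_all <;> omega

theorem fin_sign (n : ℕ) (j : Fin (n + 1)) (k : Fin (n + 2)) :
    ((k.succAbove j : Fin (n + 2)) : ℕ) +
      (((k.succAbove j).castSucc.succAbove k : Fin (n + 3)) : ℕ) = j + k + 1 := by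
  obtain ⟨j, hj⟩ := j
  obtain ⟨k, hk⟩ := k
  simp only [Fin.succAbove, Fin.lt_def, Fin.castSucc_mk, Fin.succ_mk]
  split_ifs <;> simp_all <;> (try split_ifs at *) <;> simp_all <;> omega

theorem omegaT_coface (p : ℕ) [Fact p.Prime] (σ : Type*) (n : ℕ) (j : Fin (n + 1))
    (k : Fin (n + 2)) (a : tensorPowerPoly p σ (n + 1)) (i : σ) (e : Fin (n + 2)) :
    omegaT p σ (n + 1) (k.succAbove j)
        (kaehlerMap (tensorPowerPolyCoface p σ (n + 1) ((k.succAbove j).castSucc.succAbove k))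
          (a • KaehlerDifferential.D _ _ (MvPolynomial.X (i, e)))) =
      kaehlerMap (tensorPowerPolyCoface p σ n k)
        (omegaT p σ n j (a • KaehlerDifferential.D _ _ (MvPolynomial.X (i, e)))) := by
  rw [coface_apply, omegaT_apply, omegaT_apply]
  simp only [fin_le_iff]
  split_ifs
  · rw [coface_apply, MvPolynomial.rename_rename, MvPolynomial.rename_rename, fin_fun_eq]
    congr 3
    ext ⟨x, y⟩ <;> simp [fin_fun_eq]
  · simp

theorem omegaT_diag (p : ℕ) [Fact p.Prime] (σ : Type*) (n : ℕ) (j : Fin (n + 1))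
    (a : tensorPowerPoly p σ n) (i : σ) (e : Fin (n + 1)) :
    omegaT p σ n j (kaehlerMap (tensorPowerPolyCoface p σ n j.castSucc)
          (a • KaehlerDifferential.D _ _ (MvPolynomial.X (i, e)))) =
      if e < j then a • KaehlerDifferential.D _ _ (MvPolynomial.X (i, e)) else 0 := by
  rw [coface_apply, omegaT_apply]
  have h : j.castSucc.succAbove e ≤ j.castSucc ↔ e < j := by
    simp only [Fin.succAbove, Fin.lt_def, Fin.le_def]
    split_ifs <;> simp_all <;> omega
  have h2 : ∀ e : Fin (n + 1), j.predAbove (j.castSucc.succAbove e) = e := by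
    intro e; simp
  simp only [h]
  split_ifs
  · rw [MvPolynomial.rename_rename, h2]
    have : Prod.map (id : σ → σ) j.predAbove ∘ Prod.map id j.castSucc.succAbove = id := by
      ext ⟨x, y⟩ <;> simp
    rw [this, MvPolynomial.rename_id_apply]
  · rfl

theorem omegaT_diag_succ (p : ℕ) [Fact p.Prime] (σ : Type*) (n : ℕ) (j : Fin (n + 1))
    (a : tensorPowerPoly p σ n) (i : σ) (e : Fin (n + 1)) :
    omegaT p σ n j (kaehlerMap (tensorPowerPolyCoface p σ n j.succ)
          (a • KaehlerDifferential.D _ _ (MvPolynomial.X (i, e)))) =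
      if e ≤ j then a • KaehlerDifferential.D _ _ (MvPolynomial.X (i, e)) else 0 := by
  rw [coface_apply, omegaT_apply]
  have h : j.succ.succAbove e ≤ j.castSucc ↔ e ≤ j := by
    simp only [Fin.succAbove, Fin.lt_def, Fin.le_def]
    split_ifs <;> simp_all <;> omega
  have h2 : ∀ e : Fin (n + 1), j.predAbove (j.succ.succAbove e) = e := by
    clear h
    intro e
    rcases le_or_gt e j with h | h
    · rw [Fin.succAbove_of_castSucc_lt _ _ (by
          simp only [Fin.lt_def, Fin.le_def, Fin.val_castSucc, Fin.val_succ] at h ⊢; omega),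
        Fin.predAbove_of_le_castSucc _ _ (by simpa using h)]
      simp
    · rw [Fin.succAbove_of_le_castSucc _ _ (by
          simp only [Fin.lt_def, Fin.le_def, Fin.val_castSucc, Fin.val_succ] at h ⊢; omega),
        Fin.predAbove_of_castSucc_lt _ _ (by
          simp only [Fin.lt_def, Fin.le_def, Fin.val_castSucc, Fin.val_succ] at h ⊢; omega)]
      simp
  simp only [h]
  split_ifs
  · rw [MvPolynomial.rename_rename, h2]
    have : Prod.map (id : σ → σ) j.predAbove ∘ Prod.map id j.succ.succAbove = id := by
      ext ⟨x, y⟩ <;> simp [h2]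
    rw [this, MvPolynomial.rename_id_apply]
  · rfl

theorem double_sum_cancel {A : Type*} [AddCommGroup A] (n : ℕ)
    (F : Fin (n + 2) → Fin (n + 3) → A) (U : Fin (n + 1) → Fin (n + 2) → A)
    (h : ∀ j k, F (k.succAbove j) ((k.succAbove j).castSucc.succAbove k) = - U j k) :
    ∑ j, ∑ k, F j k + ∑ j, ∑ k, U j k = ∑ j, (F j j.castSucc + F j j.succ) := by
  have h1 : ∀ j, ∑ k, F j k = F j j.castSucc + ∑ k, F j (j.castSucc.succAbove k) :=
    fun j => Fin.sum_univ_succAbove _ _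
  simp only [h1, Finset.sum_add_distrib]
  have h2 : ∑ j, ∑ k, F j (j.castSucc.succAbove k) =
      ∑ k : Fin (n + 2), (F k k.succ - ∑ j, U j k) := by
    rw [Finset.sum_comm]
    refine Finset.sum_congr rfl fun k _ => ?_
    rw [Fin.sum_univ_succAbove _ k]
    simp [h, sub_eq_add_neg]
  rw [h2, Finset.sum_sub_distrib, Finset.sum_comm (f := U)]
  abel

/-- The homotopy. -/
noncomputable def omegaS (p : ℕ) [Fact p.Prime] (σ : Type*) (n : ℕ) :
    Ω[tensorPowerPoly p σ (n + 1)⁄PadicInt p] →+ Ω[tensorPowerPoly p σ n⁄PadicInt p] :=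
  -∑ j : Fin (n + 1), (-1 : ℤ) ^ (j : ℕ) • omegaT p σ n j

theorem omegaS_diff (p : ℕ) [Fact p.Prime] (σ : Type*) (n : ℕ)
    (x : Ω[tensorPowerPoly p σ n⁄PadicInt p]) :
    omegaS p σ n (tensorPowerPolyOmegaDiff p σ n x) =
      -∑ j : Fin (n + 1), ∑ k : Fin (n + 2), (-1 : ℤ) ^ ((j : ℕ) + (k : ℕ)) •
        omegaT p σ n j (kaehlerMap (tensorPowerPolyCoface p σ n k) x) := by
  simp only [omegaS, tensorPowerPolyOmegaDiff, AddMonoidHom.neg_apply,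
    AddMonoidHom.finsetSum_apply, AddMonoidHom.smul_apply, map_sum, map_zsmul,
    Finset.smul_sum, smul_smul, pow_add, smul_neg, Finset.sum_neg_distrib]
  rw [Finset.sum_comm]
  simp only [mul_comm]

theorem diff_omegaS (p : ℕ) [Fact p.Prime] (σ : Type*) (n : ℕ)
    (x : Ω[tensorPowerPoly p σ (n + 1)⁄PadicInt p]) :
    tensorPowerPolyOmegaDiff p σ n (omegaS p σ n x) =
      -∑ j : Fin (n + 1), ∑ k : Fin (n + 2), (-1 : ℤ) ^ ((j : ℕ) + (k : ℕ)) •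
        kaehlerMap (tensorPowerPolyCoface p σ n k) (omegaT p σ n j x) := by
  simp only [omegaS, tensorPowerPolyOmegaDiff, AddMonoidHom.neg_apply, map_neg,
    AddMonoidHom.finsetSum_apply, AddMonoidHom.smul_apply, map_sum, map_zsmul,
    Finset.smul_sum, smul_smul, pow_add]

theorem diag_sum (p : ℕ) [Fact p.Prime] (σ : Type*) (n : ℕ)
    (a : tensorPowerPoly p σ n) (i : σ) (e : Fin (n + 1)) :
    ∑ j : Fin (n + 1),
      ((-1 : ℤ) ^ ((j : ℕ) + ((j.castSucc : Fin (n + 2)) : ℕ)) •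
        omegaT p σ n j (kaehlerMap (tensorPowerPolyCoface p σ n j.castSucc)
          (a • KaehlerDifferential.D _ _ (MvPolynomial.X (i, e)))) +
      (-1 : ℤ) ^ ((j : ℕ) + ((j.succ : Fin (n + 2)) : ℕ)) •
        omegaT p σ n j (kaehlerMap (tensorPowerPolyCoface p σ n j.succ)
          (a • KaehlerDifferential.D _ _ (MvPolynomial.X (i, e))))) =
      -(a • KaehlerDifferential.D (PadicInt p) (tensorPowerPoly p σ n)
        (MvPolynomial.X (i, e))) := by
  rw [Finset.sum_eq_single e]
  · rw [omegaT_diag, omegaT_diag_succ, if_neg (lt_irrefl _), if_pos le_rfl, Fin.val_succ,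
      ← add_assoc, pow_succ, Even.neg_one_pow ⟨_, rfl⟩]
    simp
  · intro j _ hj
    rw [omegaT_diag, omegaT_diag_succ, Fin.val_succ, Fin.val_castSucc,
      ← add_assoc, pow_succ, Even.neg_one_pow ⟨_, rfl⟩]
    have : e < j ↔ e ≤ j := ⟨le_of_lt, fun h => lt_of_le_of_ne h hj.symm⟩
    simp only [this]
    split_ifs <;> simp
  · simp

/-- For `P = ℤ_p[{x_i}_{i ∈ σ}]` and `P(n)` the `(n+1)`-fold tensor power
of `P` over `ℤ_p`, the cochain complex of abelian groups with `n`-th term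
`Ω¹_{P(n)/ℤ_p}` and differential the alternating sum of the maps induced by the coface
homomorphisms is homotopy equivalent to the zero cochain complex; i.e. there is a chain
contraction: maps `s_n : Ω¹_{P(n+1)} → Ω¹_{P(n)}` with `s_0 ∘ d^0 = id` and
`s_{n+1} ∘ d^{n+1} + d^n ∘ s_n = id` for all `n`. -/
theorem statement6 (p : ℕ) [Fact p.Prime] (σ : Type*) :
    ∃ s : ∀ n : ℕ,
        Ω[tensorPowerPoly p σ (n + 1)⁄PadicInt p] →+ Ω[tensorPowerPoly p σ n⁄PadicInt p],
      (s 0).comp (tensorPowerPolyOmegaDiff p σ 0) = AddMonoidHom.id _ ∧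
      ∀ n : ℕ,
        (s (n + 1)).comp (tensorPowerPolyOmegaDiff p σ (n + 1)) +
          (tensorPowerPolyOmegaDiff p σ n).comp (s n) = AddMonoidHom.id _ := by
  refine ⟨omegaS p σ, ?_, fun n => ?_⟩
  · refine omega_hom_ext _ _ fun a v => ?_
    obtain ⟨i, e⟩ := v
    rw [AddMonoidHom.comp_apply, omegaS_diff, AddMonoidHom.id_apply, neg_eq_iff_eq_neg,
      ← diag_sum]
    refine Finset.sum_congr rfl fun j _ => ?_
    rw [Fin.sum_univ_two]
    obtain rfl : j = 0 := by ext; omega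
    rfl
  · refine omega_hom_ext _ _ fun a v => ?_
    obtain ⟨i, e⟩ := v
    rw [AddMonoidHom.add_apply, AddMonoidHom.comp_apply, AddMonoidHom.comp_apply,
      omegaS_diff, diff_omegaS, AddMonoidHom.id_apply, ← neg_add, neg_eq_iff_eq_neg,
      ← diag_sum]
    refine double_sum_cancel n _ _ fun j k => ?_
    rw [omegaT_coface, fin_sign, pow_succ]
    simp
end

section
/- Let σ be a set and let P = ℤ_p[{x_i}_{i ∈ σ}]. For each n ≥ 0 let P(n) = P ⊗_{ℤ_p} ⋯ ⊗_{ℤ_p} P ((n+1) tensor factors). Then the cochain complex with n-th term Ω¹_{P(n)/ℤ_p} and differential the alternating sum d^n = Σ_{j=0}^{n+1} (−1)^j (δ^n_j)_* of the maps induced by the coface ring homomorphisms is exact in every degree: d^0 : Ω¹_{P/ℤ_p} → Ω¹_{P(1)/ℤ_p} is injective, and for every n ≥ 1 the kernel of d^n equals the image of d^{n−1}. -/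
open KaehlerDifferential

theorem kaehlerMap_D {R A B : Type*} [CommRing R] [CommRing A] [CommRing B]
    [Algebra R A] [Algebra R B] (g : A →ₐ[R] B) (a : A) :
    kaehlerMap g (KaehlerDifferential.D R A a) = KaehlerDifferential.D R B (g a) := by
  letI : Algebra A B := g.toRingHom.toAlgebra
  haveI : IsScalarTower R A B := IsScalarTower.of_algebraMap_eq fun r => (g.commutes r).symm
  haveI : SMulCommClass R A B :=
    ⟨fun r a b => by simp only [Algebra.smul_def, ← mul_assoc, mul_comm]⟩
  exact KaehlerDifferential.map_D R R A B a

theorem kaehlerMap_smul {R A B : Type*} [CommRing R] [CommRing A] [CommRing B]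
    [Algebra R A] [Algebra R B] (g : A →ₐ[R] B) (a : A) (x : Ω[A⁄R]) :
    kaehlerMap g (a • x) = g a • kaehlerMap g x := by
  letI : Algebra A B := g.toRingHom.toAlgebra
  haveI : IsScalarTower R A B := IsScalarTower.of_algebraMap_eq fun r => (g.commutes r).symm
  haveI : SMulCommClass R A B :=
    ⟨fun r a b => by simp only [Algebra.smul_def, ← mul_assoc, mul_comm]⟩
  have h := (KaehlerDifferential.map R R A B).map_smul a x
  exact h.trans (algebra_compatible_smul B a (KaehlerDifferential.map R R A B x))

theorem kaehler_induction {R A : Type*} [CommRing R] [CommRing A] [Algebra R A]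
    {motive : Ω[A⁄R] → Prop} (x : Ω[A⁄R])
    (hD : ∀ a, motive (KaehlerDifferential.D R A a)) (h0 : motive 0)
    (hadd : ∀ x y, motive x → motive y → motive (x + y))
    (hsmul : ∀ (a : A) x, motive x → motive (a • x)) : motive x := by
  have hx : x ∈ Submodule.span A (Set.range (KaehlerDifferential.D R A)) := by
    rw [KaehlerDifferential.span_range_derivation]; trivial
  refine Submodule.span_induction ?_ h0 (fun x y _ _ => hadd x y) (fun a x _ => hsmul a x) hx
  rintro _ ⟨a, rfl⟩
  exact hD a

theorem kaehlerMap_comp {R A B C : Type*} [CommRing R] [CommRing A] [CommRing B] [CommRing C]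
    [Algebra R A] [Algebra R B] [Algebra R C] (g : A →ₐ[R] B) (f : B →ₐ[R] C) (x : Ω[A⁄R]) :
    kaehlerMap f (kaehlerMap g x) = kaehlerMap (f.comp g) x := by
  induction x using kaehler_induction with
  | hD a => simp [kaehlerMap_D]
  | h0 => simp
  | hadd x y hx hy => simp [hx, hy]
  | hsmul a x hx => simp [kaehlerMap_smul, hx]

theorem kaehlerMap_id {R A : Type*} [CommRing R] [CommRing A]
    [Algebra R A] (x : Ω[A⁄R]) : kaehlerMap (AlgHom.id R A) x = x := by
  induction x using kaehler_induction with
  | hD a => simp [kaehlerMap_D]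
  | h0 => simp
  | hadd x y hx hy => simp [hx, hy]
  | hsmul a x hx => simp [kaehlerMap_smul, hx]

/-- A map that factors through the base ring induces zero on differentials. -/
theorem kaehlerMap_eq_zero {R A B : Type*} [CommRing R] [CommRing A] [CommRing B]
    [Algebra R A] [Algebra R B] (g : A →ₐ[R] B) (e : A → R) (h : ∀ a, g a = algebraMap R B (e a))
    (x : Ω[A⁄R]) : kaehlerMap g x = 0 := by
  induction x using kaehler_induction with
  | hD a => simp [kaehlerMap_D, h]
  | h0 => simp
  | hadd x y hx hy => simp [hx, hy]
  | hsmul a x hx => simp [kaehlerMap_smul, hx]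

/-- The extra codegeneracy: kill the variables of slot zero and shift the others down. -/
noncomputable def extraDegen (p : ℕ) [Fact p.Prime] (σ : Type*) (n : ℕ) :
    tensorPowerPoly p σ (n + 1) →ₐ[PadicInt p] tensorPowerPoly p σ n :=
  MvPolynomial.aeval fun q : σ × Fin (n + 2) =>
    (Fin.cases 0 (fun e => MvPolynomial.X (q.1, e)) q.2 : tensorPowerPoly p σ n)

theorem extraDegen_comp_coface_zero (p : ℕ) [Fact p.Prime] (σ : Type*) (n : ℕ) :
    (extraDegen p σ n).comp (tensorPowerPolyCoface p σ n 0) = AlgHom.id _ _ := by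
  apply MvPolynomial.algHom_ext
  rintro ⟨i, e⟩
  simp [extraDegen, tensorPowerPolyCoface]

theorem extraDegen_comp_coface_succ (p : ℕ) [Fact p.Prime] (σ : Type*) (n : ℕ)
    (j : Fin (n + 2)) :
    (extraDegen p σ (n + 1)).comp (tensorPowerPolyCoface p σ (n + 1) j.succ) =
      (tensorPowerPolyCoface p σ n j).comp (extraDegen p σ n) := by
  apply MvPolynomial.algHom_ext
  rintro ⟨i, e⟩
  cases e using Fin.cases with
  | zero => simp [extraDegen, tensorPowerPolyCoface]
  | succ e => simp [extraDegen, tensorPowerPolyCoface]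

theorem extraDegen_comp_coface_one (p : ℕ) [Fact p.Prime] (σ : Type*) :
    (extraDegen p σ 0).comp (tensorPowerPolyCoface p σ 0 1) =
      (Algebra.ofId (PadicInt p) (tensorPowerPoly p σ 0)).comp
        (MvPolynomial.aeval (fun _ => (0 : PadicInt p))) := by
  apply MvPolynomial.algHom_ext
  rintro ⟨i, e⟩
  obtain rfl : e = 0 := Fin.eq_zero e
  simp [extraDegen, tensorPowerPolyCoface]

theorem coface_comp_coface (p : ℕ) [Fact p.Prime] (σ : Type*) (n : ℕ)
    (i : Fin (n + 3)) (j : Fin (n + 2)) :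
    (tensorPowerPolyCoface p σ (n + 1) (i.succAbove j)).comp
        (tensorPowerPolyCoface p σ n (j.predAbove i)) =
      (tensorPowerPolyCoface p σ (n + 1) i).comp (tensorPowerPolyCoface p σ n j) := by
  apply MvPolynomial.algHom_ext
  rintro ⟨a, e⟩
  simp [tensorPowerPolyCoface, Fin.succAbove_succAbove_succAbove_predAbove]

theorem omegaDiff_apply (p : ℕ) [Fact p.Prime] (σ : Type*) (n : ℕ)
    (x : Ω[tensorPowerPoly p σ n⁄PadicInt p]) :
    tensorPowerPolyOmegaDiff p σ n x =
      ∑ j : Fin (n + 2), (-1 : ℤ) ^ (j : ℕ) • kaehlerMap (tensorPowerPolyCoface p σ n j) x := by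
  simp only [tensorPowerPolyOmegaDiff, AddMonoidHom.finsetSum_apply, AddMonoidHom.smul_apply]

theorem omegaDiff_omegaDiff (p : ℕ) [Fact p.Prime] (σ : Type*) (n : ℕ)
    (x : Ω[tensorPowerPoly p σ n⁄PadicInt p]) :
    tensorPowerPolyOmegaDiff p σ (n + 1) (tensorPowerPolyOmegaDiff p σ n x) = 0 := by
  simp only [omegaDiff_apply, map_sum, map_zsmul, Finset.smul_sum, smul_smul, ← pow_add,
    kaehlerMap_comp]
  rw [Finset.sum_comm, ← Fintype.sum_prod_type']
  refine Finset.sum_involution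
    (fun (q : Fin (n + 3) × Fin (n + 2)) _ => (q.1.succAbove q.2, q.2.predAbove q.1)) ?_ ?_ ?_ ?_
  · rintro ⟨i, j⟩ -
    simp only [coface_comp_coface, add_comm (Fin.val (Fin.predAbove _ _)), add_comm (j : ℕ),
      Fin.neg_one_pow_succAbove_add_predAbove, neg_smul,
      add_neg_cancel]
  · rintro ⟨i, j⟩ - - h
    exact Fin.succAbove_ne i j (congrArg Prod.fst h)
  · intros; simp
  · rintro ⟨i, j⟩ -
    simp only [Fin.succAbove_succAbove_predAbove, Fin.predAbove_predAbove_succAbove]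

theorem extraDegen_omegaDiff_zero (p : ℕ) [Fact p.Prime] (σ : Type*)
    (x : Ω[tensorPowerPoly p σ 0⁄PadicInt p]) :
    kaehlerMap (extraDegen p σ 0) (tensorPowerPolyOmegaDiff p σ 0 x) = x := by
  have h1 : kaehlerMap ((extraDegen p σ 0).comp (tensorPowerPolyCoface p σ 0 1)) x = 0 :=
    kaehlerMap_eq_zero _ (MvPolynomial.aeval (fun _ => (0 : PadicInt p)))
      (fun a => by rw [extraDegen_comp_coface_one]; rfl) x
  rw [omegaDiff_apply, Fin.sum_univ_two, map_add, map_zsmul, map_zsmul, kaehlerMap_comp,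
    kaehlerMap_comp, h1, extraDegen_comp_coface_zero, kaehlerMap_id]
  simp

theorem extraDegen_omegaDiff_succ (p : ℕ) [Fact p.Prime] (σ : Type*) (n : ℕ)
    (x : Ω[tensorPowerPoly p σ (n + 1)⁄PadicInt p]) :
    kaehlerMap (extraDegen p σ (n + 1)) (tensorPowerPolyOmegaDiff p σ (n + 1) x) =
      x - tensorPowerPolyOmegaDiff p σ n (kaehlerMap (extraDegen p σ n) x) := by
  rw [omegaDiff_apply, omegaDiff_apply, Fin.sum_univ_succ, map_add, map_zsmul, map_sum,
    kaehlerMap_comp, extraDegen_comp_coface_zero, kaehlerMap_id, sub_eq_add_neg,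
    ← Finset.sum_neg_distrib]
  congr 1
  · simp
  · refine Finset.sum_congr rfl fun j _ => ?_
    rw [map_zsmul, kaehlerMap_comp, kaehlerMap_comp, extraDegen_comp_coface_succ, Fin.val_succ,
      pow_succ, mul_neg_one, neg_smul]

/-- For `P = ℤ_p[{x_i}_{i ∈ σ}]` and `P(n)` the `(n+1)`-fold tensor power
of `P` over `ℤ_p`, the cochain complex with `n`-th term `Ω¹_{P(n)/ℤ_p}` and differential
`d^n = Σ_{j=0}^{n+1} (−1)^j (δ^n_j)_*` is exact in every degree: `d^0` is injective, and
for every `n ≥ 1` the kernel of `d^n` equals the image of `d^{n−1}`. -/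
theorem statement7 (p : ℕ) [Fact p.Prime] (σ : Type*) :
    Function.Injective (tensorPowerPolyOmegaDiff p σ 0) ∧
    ∀ n : ℕ, ∀ x : Ω[tensorPowerPoly p σ (n + 1)⁄PadicInt p],
      tensorPowerPolyOmegaDiff p σ (n + 1) x = 0 ↔
        ∃ y : Ω[tensorPowerPoly p σ n⁄PadicInt p], tensorPowerPolyOmegaDiff p σ n y = x := by
  refine ⟨fun x y h => ?_, fun n x => ⟨fun h => ?_, ?_⟩⟩
  · rw [← extraDegen_omegaDiff_zero p σ x, h, extraDegen_omegaDiff_zero]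
  · refine ⟨kaehlerMap (extraDegen p σ n) x, ?_⟩
    have h2 := extraDegen_omegaDiff_succ p σ n x
    rw [h, map_zero] at h2
    exact (sub_eq_zero.mp h2.symm).symm
  · rintro ⟨y, rfl⟩
    exact omegaDiff_omegaDiff p σ n y
end
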